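/- arXiv:1504.00440 — 2 statements merged into one kernel-verified Lean document; each statement's English description precedes it below -/
import Mathlib

section
/- The degree of the Vorob'ev–Yablonski polynomial Q_n is n(n+1)/2, and Q_n is monic, where Q_n is defined recursively by Q_{n+1} Q_{n−1} = x Q_n^2 − 4(Q_n'' Q_n − (Q_n')^2) with Q_0 = 1, Q_1 = x. -/
open Polynomial

/-- A sequence of complex polynomials satisfies the Vorob'ev-Yablonski recursion if
`Q_0 = 1`, `Q_1 = X` and
`Q_{n+1} Q_{n-1} = x Q_n^2 - 4 (Q_n'' Q_n - (Q_n')^2)` for all `n ≥ 1`. -/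
def IsVY (Q : ℕ → Polynomial ℂ) : Prop :=
  Q 0 = 1 ∧ Q 1 = X ∧
    ∀ n : ℕ, Q (n+2) * Q n =
      X * (Q (n+1))^2 - 4 * (derivative (derivative (Q (n+1))) * Q (n+1) - (derivative (Q (n+1)))^2)

namespace VorobevYablonski

/-- The right-hand side of the Vorob'ev-Yablonski recursion. -/
noncomputable def todaRHS (p : ℂ[X]) : ℂ[X] :=
  X * p ^ 2 - 4 * (derivative (derivative p) * p - derivative p ^ 2)

/-- The Hirota bilinear expression `D² p · q`. -/
noncomputable def hirotaSq (p q : ℂ[X]) : ℂ[X] :=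
  derivative (derivative p) * q - 2 * (derivative p * derivative q) +
    p * derivative (derivative q)

/-- If `D² p · q = 0`, then modulo `p` the polynomial `p'² * todaRHS q` is `q²` times this
expression, which depends on `p` only. -/
noncomputable def rootObstruction (p : ℂ[X]) : ℂ[X] :=
  X * derivative p ^ 2 + 3 * derivative (derivative p) ^ 2 -
    4 * (derivative p * derivative (derivative (derivative p)))

theorem isUnit_natCast {k : ℕ} (hk : k ≠ 0) : IsUnit (k : ℂ[X]) := by
  rw [← C_eq_natCast]
  exact isUnit_C.mpr (isUnit_iff_ne_zero.mpr (Nat.cast_ne_zero.mpr hk))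

theorem hirotaSq_comm (p q : ℂ[X]) : hirotaSq p q = hirotaSq q p := by
  unfold hirotaSq; ring

theorem dvd_todaRHS_sub_rootObstruction {p q : ℂ[X]} (h : hirotaSq p q = 0) :
    p ∣ derivative p ^ 2 * todaRHS q - q ^ 2 * rootObstruction p := by
  have h' := congrArg derivative h
  simp only [hirotaSq, derivative_add, derivative_sub, derivative_mul, derivative_ofNat,
    derivative_zero] at h h'
  refine ⟨-4 * q * derivative p * derivative (derivative (derivative q)) +
    (2 * derivative q * derivative p + 3 * q * derivative (derivative p)) *
      derivative (derivative q), ?_⟩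
  unfold todaRHS rootObstruction
  linear_combination 4 * q * derivative p * h' -
    (2 * derivative q * derivative p + 3 * q * derivative (derivative p)) * h

/-- Relations between three consecutive Vorob'ev-Yablonski polynomials
`r = Q_{n-1}`, `p = Q_n`, `q = Q_{n+1}`. -/
structure Consecutive (n : ℕ) (r p q : ℂ[X]) : Prop where
  ne_zero : r ≠ 0
  toda : q * r = todaRHS p
  hirota : hirotaSq r p = 0
  wronskian : derivative q * r - q * derivative r = (2 * n + 1) * p ^ 2
  coprime_derivative : IsCoprime p (derivative p)
  dvd_rootObstruction : p ∣ rootObstruction p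

namespace Consecutive

variable {n : ℕ} {r p q : ℂ[X]}

theorem hirota_next (h : Consecutive n r p q) : hirotaSq p q = 0 := by
  have hW := h.wronskian
  have hW' := congrArg derivative hW
  have hB := h.hirota
  refine (mul_eq_zero.mp ?_).resolve_left h.ne_zero
  unfold hirotaSq at hB ⊢
  simp [derivative_pow, map_ofNat C] at hW'
  linear_combination p * hW' - 2 * derivative p * hW + q * hB

theorem coprime_next (h : Consecutive n r p q) : IsCoprime p q := by
  have h4 : IsUnit (4 : ℂ[X]) := by
    exact_mod_cast isUnit_natCast four_ne_zero
  have h1 : IsCoprime p (4 * derivative p ^ 2) :=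
    (isCoprime_mul_unit_left_right h4 _ _).mpr h.coprime_derivative.pow_right
  have h2 : q * r = 4 * derivative p ^ 2 + p * (X * p - 4 * derivative (derivative p)) := by
    rw [h.toda, todaRHS]; ring
  have h3 : IsCoprime p (q * r) := by
    rw [h2]; exact h1.add_mul_left_right _
  exact h3.of_mul_right_left

theorem coprime_derivative_next (h : Consecutive n r p q) : IsCoprime q (derivative q) := by
  have hc : IsUnit (2 * n + 1 : ℂ[X]) := by
    exact_mod_cast isUnit_natCast (Nat.succ_ne_zero (2 * n))
  have h1 : IsCoprime q ((2 * n + 1) * p ^ 2) :=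
    (isCoprime_mul_unit_left_right hc _ _).mpr h.coprime_next.symm.pow_right
  have h2 : derivative q * r = (2 * n + 1) * p ^ 2 + q * derivative r := by
    linear_combination h.wronskian
  have h3 : IsCoprime q (derivative q * r) := by
    rw [h2]; exact h1.add_mul_left_right _
  exact h3.of_mul_right_left

theorem dvd_rootObstruction_next (h : Consecutive n r p q) : q ∣ rootObstruction q := by
  have h1 := dvd_todaRHS_sub_rootObstruction ((hirotaSq_comm q p).trans h.hirota_next)
  have h2 : q ∣ derivative q ^ 2 * todaRHS p :=
    (h.toda ▸ dvd_mul_right q r).mul_left _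
  exact h.coprime_next.symm.pow_right.dvd_of_dvd_mul_left ((dvd_sub_right h2).mp h1)

theorem dvd_todaRHS (h : Consecutive n r p q) : p ∣ todaRHS q := by
  have h1 := dvd_todaRHS_sub_rootObstruction h.hirota_next
  exact h.coprime_derivative.pow_right.dvd_of_dvd_mul_left
    ((dvd_sub_left (h.dvd_rootObstruction.mul_left _)).mp h1)

theorem left_ne_zero (h : Consecutive n r p q) : p ≠ 0 := by
  rintro rfl
  simpa using h.coprime_derivative.ne_zero_or_ne_zero

theorem wronskian_next (h : Consecutive n r p q) {s : ℂ[X]} (hs : s * p = todaRHS q) :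
    derivative s * p - s * derivative p = (2 * (n + 1 : ℕ) + 1) * q ^ 2 := by
  have hB := h.hirota_next
  have hT := h.toda
  have hW := h.wronskian
  unfold hirotaSq at hB
  unfold todaRHS at hT hs
  set d := p * derivative q - derivative p * q with hd
  have hE : s * p ^ 3 + r * q ^ 3 = 2 * X * p ^ 2 * q ^ 2 + 4 * d ^ 2 := by
    rw [hd]
    linear_combination p ^ 2 * hs - 4 * p * q * hB + q ^ 2 * hT
  have hd' : derivative d = p * derivative (derivative q) - derivative (derivative p) * q := by
    rw [hd]; simp only [derivative_sub, derivative_mul]; ring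
  have hE' := congrArg derivative hE
  simp [derivative_pow, hd', map_ofNat C] at hE'
  have hD : -r * q ^ 2 + X * p ^ 2 * q - 4 * derivative p * d + 2 * p * derivative d = 0 := by
    rw [hd', hd]
    linear_combination 2 * p * hB - q * hT
  rw [hd'] at hD
  refine mul_left_cancel₀ (pow_ne_zero 3 h.left_ne_zero) ?_
  push_cast
  linear_combination p * hE' - 4 * derivative p * hE + p * q ^ 2 * hW + 4 * d * hD

theorem exists_next (h : Consecutive n r p q) : ∃ s, Consecutive (n + 1) p q s := by
  obtain ⟨s, hs⟩ := h.dvd_todaRHS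
  have hs' : s * p = todaRHS q := by rw [hs, mul_comm]
  exact ⟨s, h.left_ne_zero, hs', h.hirota_next, h.wronskian_next hs',
    h.coprime_derivative_next, h.dvd_rootObstruction_next⟩

end Consecutive

theorem consecutive_zero : Consecutive 0 1 1 X where
  ne_zero := one_ne_zero
  toda := by simp [todaRHS]
  hirota := by simp [hirotaSq]
  wronskian := by simp
  coprime_derivative := isCoprime_one_left
  dvd_rootObstruction := one_dvd _

theorem exists_isVY : ∃ Q : ℕ → ℂ[X], IsVY Q := by
  choose next hnext using
    fun (n : ℕ) (t : {t : ℂ[X] × ℂ[X] × ℂ[X] // Consecutive n t.1 t.2.1 t.2.2}) =>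
      t.2.exists_next
  let T : ∀ n : ℕ, {t : ℂ[X] × ℂ[X] × ℂ[X] // Consecutive n t.1 t.2.1 t.2.2} := fun n =>
    Nat.rec ⟨(1, 1, X), consecutive_zero⟩
      (fun n t => ⟨(t.1.2.1, t.1.2.2, next n t), hnext n t⟩) n
  exact ⟨fun n => (T n).1.2.1, rfl, rfl, fun n => (T (n + 1)).2.toda⟩

theorem monic_todaRHS {p : ℂ[X]} (hp : p.Monic) :
    (todaRHS p).Monic ∧ (todaRHS p).natDegree = 2 * p.natDegree + 1 := by
  have hM : (X * p ^ 2).Monic := monic_X.mul (hp.pow 2)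
  have hdeg : (X * p ^ 2).natDegree = 2 * p.natDegree + 1 := by
    rw [monic_X.natDegree_mul (hp.pow 2), hp.natDegree_pow, natDegree_X, add_comm]
  have h1 : (derivative p).natDegree ≤ p.natDegree :=
    (natDegree_derivative_le p).trans (Nat.sub_le _ _)
  have h2 : (derivative (derivative p)).natDegree ≤ p.natDegree :=
    ((natDegree_derivative_le _).trans (Nat.sub_le _ _)).trans h1
  have hlow : (4 * (derivative (derivative p) * p - derivative p ^ 2)).natDegree ≤
      2 * p.natDegree := by
    refine natDegree_mul_le.trans ?_
    rw [natDegree_ofNat, zero_add]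
    refine (natDegree_sub_le _ _).trans (max_le ?_ ?_)
    · exact natDegree_mul_le.trans (by omega)
    · exact natDegree_pow_le.trans (by omega)
  have hlt : (4 * (derivative (derivative p) * p - derivative p ^ 2)).natDegree <
      (X * p ^ 2).natDegree := by omega
  exact ⟨hM.sub_of_left (degree_lt_degree hlt),
    (natDegree_sub_eq_left_of_natDegree_lt hlt).trans hdeg⟩

theorem monic_and_natDegree_of_isVY {Q : ℕ → ℂ[X]} (hQ : IsVY Q) (n : ℕ) :
    (Q n).Monic ∧ (Q n).natDegree = n * (n + 1) / 2 := by
  obtain ⟨h0, h1, hrec⟩ := hQ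
  induction n using Nat.twoStepInduction with
  | zero => simp [h0]
  | one => simp [h1, monic_X]
  | more n ih ih' =>
    obtain ⟨hm, hd⟩ := monic_todaRHS ih'.1
    have hT : Q (n + 2) * Q n = todaRHS (Q (n + 1)) := hrec n
    rw [← hT] at hm hd
    have hmonic := ih.1.of_mul_monic_right hm
    refine ⟨hmonic, ?_⟩
    rw [hmonic.natDegree_mul ih.1, ih.2, ih'.2] at hd
    have e1 : (n + 1) * (n + 1 + 1) = n * (n + 1) + 2 * (n + 1) := by ring
    have e2 : (n + 2) * (n + 2 + 1) = n * (n + 1) + 2 * (2 * n + 3) := by ring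
    rw [e1] at hd
    rw [e2]
    omega

end VorobevYablonski

/-- the Vorob'ev-Yablonski recursion produces polynomials
(existence of a polynomial solution), and every polynomial solution `Q_n` is monic
of degree `n(n+1)/2`. -/
theorem stmt_4 :
    (∃ Q : ℕ → Polynomial ℂ, IsVY Q) ∧
      ∀ Q : ℕ → Polynomial ℂ, IsVY Q → ∀ n : ℕ,
        (Q n).Monic ∧ (Q n).natDegree = n * (n+1) / 2 :=
  ⟨VorobevYablonski.exists_isVY, fun _ hQ n =>
    VorobevYablonski.monic_and_natDegree_of_isVY hQ n⟩
end

section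
/- For every n ≥ 1 and all complex parameters t_1, t_3, t_5, ..., the square of the staircase Schur polynomial satisfies s_{δ_n}(t_1, 0, 2^2 t_3, 0, 2^4 t_5, 0, ...)^2 = 2^{n^2} · s_{(n+1)^n}(t_1, 0, t_3, 0, t_5, 0, ...), where (n+1)^n is the rectangular partition with n rows of length n+1. -/
open scoped BigOperators

/-- Complete homogeneous functions `h_k(t)` defined via the generating series
`∑ h_k(t) z^k = exp(∑_{j≥1} t_j z^j)`, encoded through the equivalent recursion
`(k+1) h_{k+1} = ∑_{j=1}^{k+1} j t_j h_{k+1-j}` obtained by differentiating the series. -/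
noncomputable def hh (t : ℕ → ℂ) : ℕ → ℂ
  | 0 => 1
  | (k+1) => ((k : ℂ) + 1)⁻¹ * ∑ i ∈ Finset.range (k+1), ((i : ℂ) + 1) * t (i+1) * hh t (k - i)
decreasing_by exact Nat.lt_succ_of_le (Nat.sub_le k i)

/-- `h_k(t)` extended to integer indices, with `h_k = 0` for `k < 0`. -/
noncomputable def hZ (t : ℕ → ℂ) (m : ℤ) : ℂ := if m < 0 then 0 else hh t m.toNat

/-- Schur polynomial via the Jacobi-Trudi determinant
`s_λ(t) = det[h_{λ_j - j + k}(t)]_{j,k=1}^{ℓ}`. -/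
noncomputable def schur (ℓ : ℕ) (lam : Fin ℓ → ℕ) (t : ℕ → ℂ) : ℂ :=
  Matrix.det (Matrix.of fun j k : Fin ℓ => hZ t ((lam j : ℤ) - ((j : ℕ) + 1) + ((k : ℕ) + 1)))

namespace StaircaseSquare

open PowerSeries

/-- The generating series `∑ h_k(t) z^k`. -/
noncomputable def genH (t : ℕ → ℂ) : PowerSeries ℂ := PowerSeries.mk (hh t)

/-- The logarithmic derivative `∑ (i + 1) t_{i+1} z^i` of the generating series. -/
noncomputable def logDeriv (t : ℕ → ℂ) : PowerSeries ℂ :=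
  PowerSeries.mk fun i => ((i : ℂ) + 1) * t (i + 1)

lemma hh_succ (t : ℕ → ℂ) (k : ℕ) :
    hh t (k + 1) = ((k : ℂ) + 1)⁻¹ *
      ∑ i ∈ Finset.range (k + 1), ((i : ℂ) + 1) * t (i + 1) * hh t (k - i) := by
  rw [hh]

lemma hh_zero (t : ℕ → ℂ) : hh t 0 = 1 := by rw [hh]

lemma derivative_genH (t : ℕ → ℂ) :
    derivative ℂ (genH t) = logDeriv t * genH t := by
  ext k
  have hk : (k : ℂ) + 1 ≠ 0 := Nat.cast_add_one_ne_zero k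
  rw [coeff_derivative, coeff_mul,
    Finset.Nat.sum_antidiagonal_eq_sum_range_succ_mk]
  simp only [genH, logDeriv, coeff_mk]
  rw [hh_succ, mul_comm, mul_inv_cancel_left₀ hk]

/-- A power series with constant coefficient one is determined by its logarithmic derivative. -/
lemma eq_of_derivative_eq_mul {F G P : PowerSeries ℂ} (hF : derivative ℂ F = P * F)
    (hG : derivative ℂ G = P * G) (h0 : coeff 0 F = coeff 0 G) : F = G := by
  ext k
  induction k using Nat.strong_induction_on with
  | _ k ih =>
    cases k with
    | zero => exact h0
    | succ k =>
      have hk : (k : ℂ) + 1 ≠ 0 := Nat.cast_add_one_ne_zero k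
      have h1 := congrArg (coeff k) hF
      have h2 := congrArg (coeff k) hG
      rw [coeff_derivative, coeff_mul] at h1 h2
      apply mul_right_cancel₀ hk
      rw [h1, h2]
      refine Finset.sum_congr rfl fun p hp => ?_
      rw [ih p.2 (by have := Finset.HasAntidiagonal.mem_antidiagonal.1 hp; omega)]

lemma derivative_rescale (a : ℂ) (F : PowerSeries ℂ) :
    derivative ℂ (rescale a F) = C a * rescale a (derivative ℂ F) := by
  ext k
  simp only [coeff_derivative, coeff_rescale, coeff_C_mul]
  ring

lemma genH_mul_self (t : ℕ → ℂ) :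
    genH (fun j => 2 ^ (j - 1) * t j) * genH (fun j => 2 ^ (j - 1) * t j)
      = rescale 2 (genH t) := by
  refine eq_of_derivative_eq_mul
    (P := 2 * logDeriv (fun j => 2 ^ (j - 1) * t j)) ?_ ?_ ?_
  · rw [Derivation.leibniz, derivative_genH]
    simp only [smul_eq_mul]
    ring
  · rw [derivative_rescale, derivative_genH, map_mul, ← mul_assoc]
    congr 1
    have h2 : (2 : PowerSeries ℂ) = C (2 : ℂ) := (map_ofNat C 2).symm
    rw [h2]
    ext k
    simp only [coeff_C_mul, coeff_rescale, logDeriv, coeff_mk, Nat.add_sub_cancel]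
    ring
  · simp [coeff_mul, genH, hh_zero]

lemma rescale_neg_one_mul_genH (t : ℕ → ℂ) (ht : ∀ j, Even j → t j = 0) :
    rescale (-1) (genH t) * genH t = 1 := by
  have hP : rescale (-1) (logDeriv t) = logDeriv t := by
    ext k
    rw [coeff_rescale]
    rcases Nat.even_or_odd k with hk | hk
    · rw [hk.neg_one_pow, one_mul]
    · simp [logDeriv, ht (k + 1) hk.add_one]
  refine eq_of_derivative_eq_mul (P := 0) ?_ ?_ ?_
  · rw [Derivation.leibniz, derivative_rescale, derivative_genH, map_mul, hP]
    simp only [smul_eq_mul, map_neg, map_one]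
    ring
  · simp
  · simp [coeff_mul, genH, hh_zero]

lemma sum_hh_mul_hh (t : ℕ → ℂ) (m : ℕ) :
    ∑ l ∈ Finset.range (m + 1),
      hh (fun j => 2 ^ (j - 1) * t j) l * hh (fun j => 2 ^ (j - 1) * t j) (m - l)
      = 2 ^ m * hh t m := by
  have h := congrArg (coeff m) (genH_mul_self t)
  rw [coeff_mul, Finset.Nat.sum_antidiagonal_eq_sum_range_succ_mk, coeff_rescale] at h
  simpa only [genH, coeff_mk] using h

lemma sum_neg_one_pow_mul_hh_mul_hh (t : ℕ → ℂ) (ht : ∀ j, Even j → t j = 0) {m : ℕ}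
    (hm : m ≠ 0) :
    ∑ l ∈ Finset.range (m + 1), (-1) ^ l * hh t l * hh t (m - l) = 0 := by
  have h := congrArg (coeff m) (rescale_neg_one_mul_genH t ht)
  rw [coeff_mul, Finset.Nat.sum_antidiagonal_eq_sum_range_succ_mk, coeff_one, if_neg hm] at h
  simpa only [genH, coeff_mk, coeff_rescale] using h

lemma hZ_of_neg (t : ℕ → ℂ) {m : ℤ} (hm : m < 0) : hZ t m = 0 := if_pos hm

lemma hZ_natCast (t : ℕ → ℂ) (m : ℕ) : hZ t (m : ℤ) = hh t m := by
  simp [hZ]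

/-- A shifted convolution of the `hZ` reduces to the terms with nonnegative indices. -/
lemma sum_hZ_mul_hZ (t : ℕ → ℂ) (w : ℕ → ℂ) {m j N : ℕ} (hN : j + (m + 1) ≤ N) :
    ∑ x ∈ Finset.range N, w x * hZ t ((x : ℤ) - j) * hZ t ((m : ℤ) + j - x)
      = ∑ l ∈ Finset.range (m + 1), w (j + l) * hh t l * hh t (m - l) := by
  obtain ⟨r, rfl⟩ := Nat.exists_eq_add_of_le hN
  rw [Finset.sum_range_add, Finset.sum_range_add]
  have h1 : ∑ x ∈ Finset.range j,
      w x * hZ t ((x : ℤ) - j) * hZ t ((m : ℤ) + j - x) = 0 := by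
    refine Finset.sum_eq_zero fun x hx => ?_
    have := Finset.mem_range.1 hx
    rw [hZ_of_neg t (m := (x : ℤ) - j) (by omega)]
    ring
  have h2 : ∑ x ∈ Finset.range r, w (j + (m + 1) + x) *
      hZ t (((j + (m + 1) + x : ℕ) : ℤ) - j) *
      hZ t ((m : ℤ) + j - ((j + (m + 1) + x : ℕ) : ℤ)) = 0 := by
    refine Finset.sum_eq_zero fun x _ => ?_
    rw [hZ_of_neg t (m := (m : ℤ) + j - ((j + (m + 1) + x : ℕ) : ℤ)) (by omega)]
    ring
  rw [h1, h2, zero_add, add_zero]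
  refine Finset.sum_congr rfl fun l hl => ?_
  have := Finset.mem_range.1 hl
  rw [show ((j + l : ℕ) : ℤ) - j = (l : ℕ) by omega,
    show (m : ℤ) + j - ((j + l : ℕ) : ℤ) = ((m - l : ℕ) : ℤ) by omega,
    hZ_natCast, hZ_natCast]

lemma sum_range_two_mul (f : ℕ → ℂ) (n : ℕ) :
    ∑ x ∈ Finset.range (2 * n), f x
      = ∑ i ∈ Finset.range n, (f (2 * i) + f (2 * i + 1)) := by
  induction n with
  | zero => simp
  | succ n ih =>
    rw [Nat.mul_succ, Finset.sum_range_succ, Finset.sum_range_succ, ih, Finset.sum_range_succ,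
      add_assoc]

/-- The terms of odd shifted index make up one half of the full convolution. -/
lemma two_mul_sum_hZ_mul_hZ (t : ℕ → ℂ) (ht : ∀ j, Even j → t j = 0) {m j n : ℕ}
    (hm : m ≠ 0) (hn : m + j ≤ 2 * n) :
    2 * ∑ i ∈ Finset.range n,
      hZ (fun j => 2 ^ (j - 1) * t j) (2 * (i : ℤ) + 1 - j) *
        hZ (fun j => 2 ^ (j - 1) * t j) ((m : ℤ) + j - (2 * i + 1))
      = 2 ^ m * hh t m := by
  set s : ℕ → ℂ := fun j => 2 ^ (j - 1) * t j with hs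
  have hs0 : ∀ j, Even j → s j = 0 := fun j hj => by simp [hs, ht j hj]
  have key := sum_hZ_mul_hZ s (fun x => 1 - (-1) ^ x)
    (show j + (m + 1) ≤ 2 * n + 1 by omega)
  have hR : ∑ l ∈ Finset.range (m + 1), (1 - (-1 : ℂ) ^ (j + l)) * hh s l * hh s (m - l)
      = 2 ^ m * hh t m := by
    calc _ = ∑ l ∈ Finset.range (m + 1), hh s l * hh s (m - l)
          - (-1) ^ j * ∑ l ∈ Finset.range (m + 1), (-1) ^ l * hh s l * hh s (m - l) := by
          rw [Finset.mul_sum, ← Finset.sum_sub_distrib]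
          exact Finset.sum_congr rfl fun l _ => by ring
      _ = _ := by
          rw [sum_neg_one_pow_mul_hh_mul_hh s hs0 hm, sum_hh_mul_hh t m, mul_zero, sub_zero]
  rw [← hR, ← key, Finset.sum_range_succ, sum_range_two_mul, Finset.mul_sum]
  simp only [pow_mul, pow_succ, even_two.neg_one_pow, one_pow]
  simp only [mul_neg, mul_one, sub_self, zero_mul, zero_add,
    add_zero]
  refine Finset.sum_congr rfl fun i _ => ?_
  push_cast
  ring

end StaircaseSquare

/-- for all times with even-indexed entries zero,
`s_{δ_n}(t₁, 0, 2² t₃, 0, 2⁴ t₅, ...)² = 2^{n²} s_{(n+1)ⁿ}(t₁, 0, t₃, 0, ...)`,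
where `δ_n` is the staircase and `(n+1)ⁿ` the rectangle with `n` rows of length `n+1`. -/
theorem stmt_6 (n : ℕ) (hn : 1 ≤ n) (t : ℕ → ℂ) (ht : ∀ j, Even j → t j = 0) :
    (schur n (fun i => n - (i : ℕ)) (fun j => 2 ^ (j - 1) * t j)) ^ 2
      = 2 ^ (n ^ 2) * schur n (fun _ => n + 1) t := by
  set s : ℕ → ℂ := fun j => 2 ^ (j - 1) * t j with hs
  unfold schur
  set S : Matrix (Fin n) (Fin n) ℂ := Matrix.of fun j k : Fin n =>
    hZ s (((n - (j : ℕ) : ℕ) : ℤ) - ((j : ℕ) + 1) + ((k : ℕ) + 1)) with hS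
  set T : Matrix (Fin n) (Fin n) ℂ := Matrix.of fun j k : Fin n =>
    hZ t (((n + 1 : ℕ) : ℤ) - ((j : ℕ) + 1) + ((k : ℕ) + 1)) with hT
  set D : Matrix (Fin n) (Fin n) ℂ := Matrix.diagonal fun j : Fin n => 2 ^ (j : ℕ) with hD
  have hD0 : D.det ≠ 0 := by
    rw [hD, Matrix.det_diagonal]
    exact Finset.prod_ne_zero_iff.2 fun j _ => pow_ne_zero _ two_ne_zero
  have hmul : D * ((S.submatrix Fin.revPerm Fin.revPerm).transpose * S)
      = (2 ^ n : ℂ) • (T * D) := by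
    ext j k
    rw [hD, Matrix.diagonal_mul, Matrix.smul_apply, Matrix.mul_diagonal, Matrix.mul_apply]
    have hj := j.isLt
    have hk := k.isLt
    obtain ⟨m, hm⟩ : ∃ m : ℕ, m + (j : ℕ) = n + 1 + k :=
      ⟨n + 1 + k - j, by omega⟩
    have key := StaircaseSquare.two_mul_sum_hZ_mul_hZ t ht (m := m) (j := j) (n := n)
      (by omega) (by omega)
    rw [← hs, ← Fin.sum_univ_eq_sum_range (fun i : ℕ =>
      hZ s (2 * (i : ℤ) + 1 - (j : ℕ)) * hZ s ((m : ℤ) + (j : ℕ) - (2 * i + 1)))] at key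
    have hsum : ∑ i : Fin n, (S.submatrix Fin.revPerm Fin.revPerm).transpose j i * S i k
        = ∑ i : Fin n, hZ s (2 * ((i : ℕ) : ℤ) + 1 - (j : ℕ)) *
            hZ s ((m : ℤ) + (j : ℕ) - (2 * (i : ℕ) + 1)) := by
      refine Finset.sum_congr rfl fun i _ => ?_
      have hi := i.isLt
      simp only [hS, Matrix.transpose_apply, Matrix.submatrix_apply, Matrix.of_apply,
        Fin.revPerm_apply, Fin.val_rev]
      congr 2 <;> omega
    have hTm : T j k = hh t m := by
      rw [hT, Matrix.of_apply, ← StaircaseSquare.hZ_natCast]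
      congr 1
      omega
    rw [hsum, hTm, smul_eq_mul]
    apply mul_left_cancel₀ (two_ne_zero (α := ℂ))
    rw [mul_left_comm, key, ← mul_assoc, ← pow_add, add_comm (j : ℕ) m, hm]
    ring
  have hdet := congrArg Matrix.det hmul
  rw [Matrix.det_mul, Matrix.det_mul, Matrix.det_transpose, Matrix.det_submatrix_equiv_self,
    Matrix.det_smul, Matrix.det_mul, Fintype.card_fin] at hdet
  apply mul_left_cancel₀ hD0
  rw [sq S.det, hdet, ← pow_mul, sq n]
  ring
end
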